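/- arXiv:math/0703332 — 3 statements merged into one kernel-verified Lean document; each statement's English description precedes it below -/
import Mathlib

section
/- Let D be a symmetric 2n×2n real matrix, let ρ, μ ∈ ℝ be such that the operator norm of D is at most ρ and XᵀDX ≥ μ‖X‖² for all X (i.e., ρ bounds the absolute values of the eigenvalues of D and μ is a lower bound for its eigenvalues), let H, A be 2n×2n real matrices and κ ≥ 0 with ‖A‖ ≤ κ (operator norm). Then for every X ∈ ℝ^{2n}: Q(J_st + H, D, A, X) ≥ Q(J_st, D, 0, X) − 2ρ‖H‖·‖X‖² + μ‖HX‖² − 2κ(1 + ‖H‖)·‖X‖². -/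
open Matrix

/-- The Euclidean norm of a real vector. -/
noncomputable def evnorm {m : Type*} [Fintype m] (x : m → ℝ) : ℝ :=
  Real.sqrt (∑ i, x i ^ 2)

/-- The operator norm of a real matrix with respect to the Euclidean norm. -/
noncomputable def opnorm {m : Type*} [Fintype m] [DecidableEq m]
    (M : Matrix m m ℝ) : ℝ :=
  ‖Matrix.toEuclideanCLM (𝕜 := ℝ) M‖

/-- The coordinate expression of the Levi form:
`Q(J,D,A,X) = XᵀDX + (JX)ᵀD(JX) + Xᵀ(A − Aᵀ)(JX)`. -/
noncomputable def LeviQ {m : Type*} [Fintype m] (J D A : Matrix m m ℝ) (X : m → ℝ) : ℝ :=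
  X ⬝ᵥ D.mulVec X + (J.mulVec X) ⬝ᵥ D.mulVec (J.mulVec X)
    + X ⬝ᵥ ((A - Aᵀ).mulVec (J.mulVec X))

/-- The standard complex structure `J_st = [[0, −Iₙ],[Iₙ, 0]]` on `ℝ^{2n} = ℝⁿ ⊕ ℝⁿ`. -/
def Jstd (n : ℕ) : Matrix (Fin n ⊕ Fin n) (Fin n ⊕ Fin n) ℝ :=
  Matrix.fromBlocks 0 (-1) 1 0

theorem evnorm_eq {m : Type*} [Fintype m] (x : m → ℝ) : evnorm x = ‖WithLp.toLp 2 x‖ := by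
  rw [EuclideanSpace.norm_eq]
  simp [evnorm]

theorem evnorm_nonneg {m : Type*} [Fintype m] (x : m → ℝ) : 0 ≤ evnorm x :=
  Real.sqrt_nonneg _

theorem opnorm_nonneg {m : Type*} [Fintype m] [DecidableEq m] (M : Matrix m m ℝ) :
    0 ≤ opnorm M := norm_nonneg _

theorem evnorm_mulVec_le {m : Type*} [Fintype m] [DecidableEq m] (M : Matrix m m ℝ)
    (x : m → ℝ) : evnorm (M.mulVec x) ≤ opnorm M * evnorm x := by
  rw [evnorm_eq, evnorm_eq]
  have h := (Matrix.toEuclideanCLM (𝕜 := ℝ) M).le_opNorm (WithLp.toLp 2 x)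
  rwa [Matrix.toEuclideanCLM_toLp] at h

theorem abs_dot_le {m : Type*} [Fintype m] (x y : m → ℝ) :
    |x ⬝ᵥ y| ≤ evnorm x * evnorm y := by
  have h := abs_real_inner_le_norm (WithLp.toLp 2 y) (WithLp.toLp 2 x)
  rw [EuclideanSpace.inner_toLp_toLp] at h
  rw [evnorm_eq, evnorm_eq, mul_comm]
  simpa using h

theorem abs_dot_mulVec_le {m : Type*} [Fintype m] [DecidableEq m] (M : Matrix m m ℝ) (c : ℝ)
    (hc : opnorm M ≤ c) (x y : m → ℝ) :
    |x ⬝ᵥ M.mulVec y| ≤ c * (evnorm x * evnorm y) := by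
  have h1 := abs_dot_le x (M.mulVec y)
  have h2 : evnorm (M.mulVec y) ≤ c * evnorm y :=
    (evnorm_mulVec_le M y).trans (mul_le_mul_of_nonneg_right hc (evnorm_nonneg y))
  have h3 := mul_le_mul_of_nonneg_left h2 (evnorm_nonneg x)
  linarith

theorem dot_transpose_mulVec {m : Type*} [Fintype m] (M : Matrix m m ℝ) (x y : m → ℝ) :
    x ⬝ᵥ Mᵀ.mulVec y = y ⬝ᵥ M.mulVec x := by
  rw [Matrix.mulVec_transpose, dotProduct_comm, ← Matrix.dotProduct_mulVec]

theorem evnorm_Jstd (n : ℕ) (X : Fin n ⊕ Fin n → ℝ) :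
    evnorm ((Jstd n).mulVec X) = evnorm X := by
  simp [evnorm, Jstd, Matrix.fromBlocks_mulVec, Matrix.neg_mulVec, add_comm]

/-- If `D` is symmetric with operator norm at most `ρ` and
`XᵀDX ≥ μ‖X‖²` for all `X`, and `‖A‖ ≤ κ` with `κ ≥ 0`, then
`Q(J_st + H, D, A, X) ≥ Q(J_st, D, 0, X) − 2ρ‖H‖‖X‖² + μ‖HX‖² − 2κ(1 + ‖H‖)‖X‖²`. -/
theorem stmt9 {n : ℕ} (D H A : Matrix (Fin n ⊕ Fin n) (Fin n ⊕ Fin n) ℝ)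
    (hD : D.IsSymm) (ρ μ κ : ℝ)
    (hρ : opnorm D ≤ ρ)
    (hμ : ∀ X : Fin n ⊕ Fin n → ℝ, μ * evnorm X ^ 2 ≤ X ⬝ᵥ D.mulVec X)
    (hκ : 0 ≤ κ) (hA : opnorm A ≤ κ) (X : Fin n ⊕ Fin n → ℝ) :
    LeviQ (Jstd n + H) D A X ≥
      LeviQ (Jstd n) D 0 X - 2 * ρ * opnorm H * evnorm X ^ 2
        + μ * evnorm (H.mulVec X) ^ 2 - 2 * κ * (1 + opnorm H) * evnorm X ^ 2 := by
  have hN : evnorm ((Jstd n).mulVec X) = evnorm X := evnorm_Jstd n X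
  set Y := (Jstd n).mulVec X with hY
  set Z := H.mulVec X with hZ
  have hx := evnorm_nonneg X
  have hρ0 : 0 ≤ ρ := (opnorm_nonneg D).trans hρ
  have hZn : evnorm Z ≤ opnorm H * evnorm X := evnorm_mulVec_le H X
  have hsym : Y ⬝ᵥ D.mulVec Z = Z ⬝ᵥ D.mulVec Y := by
    rw [← dot_transpose_mulVec D Z Y, hD.eq]
  have e1 : LeviQ (Jstd n + H) D A X = X ⬝ᵥ D.mulVec X + Y ⬝ᵥ D.mulVec Y
      + 2 * (Z ⬝ᵥ D.mulVec Y) + Z ⬝ᵥ D.mulVec Z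
      + (X ⬝ᵥ A.mulVec Y - Y ⬝ᵥ A.mulVec X) + (X ⬝ᵥ A.mulVec Z - Z ⬝ᵥ A.mulVec X) := by
    unfold LeviQ
    rw [Matrix.add_mulVec, ← hY, ← hZ]
    simp only [Matrix.sub_mulVec, Matrix.mulVec_add, dotProduct_add, add_dotProduct,
      dotProduct_sub, dot_transpose_mulVec, hsym]
    ring
  have e2 : LeviQ (Jstd n) D 0 X = X ⬝ᵥ D.mulVec X + Y ⬝ᵥ D.mulVec Y := by
    simp [LeviQ, hY]
  rw [e1, e2]
  have b1 := abs_le.1 (abs_dot_mulVec_le D ρ hρ Z Y)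
  have b2 := abs_le.1 (abs_dot_mulVec_le A κ hA X Y)
  have b3 := abs_le.1 (abs_dot_mulVec_le A κ hA Y X)
  have b4 := abs_le.1 (abs_dot_mulVec_le A κ hA X Z)
  have b5 := abs_le.1 (abs_dot_mulVec_le A κ hA Z X)
  have b6 := hμ Z
  rw [hN] at b1 b2 b3
  have hZX : evnorm Z * evnorm X ≤ opnorm H * evnorm X * evnorm X :=
    mul_le_mul_of_nonneg_right hZn hx
  have c1 := mul_le_mul_of_nonneg_left hZX hρ0
  have c2 := mul_le_mul_of_nonneg_left hZX hκ
  nlinarith [b1.1, b2.1, b3.2, b4.1, b5.2]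
end

section
/- Let n ≥ 1 and let r_1, …, r_n : ℝ^{2n} → ℝ be C² functions, and p ∈ ℝ^{2n} with r_i(p) = 0 for all i. Let J be a real 2n×2n matrix with J² = −I_{2n}, and assume the totally real condition: the only X ∈ ℝ^{2n} satisfying d(r_i)_p(X) = 0 and d(r_i)_p(J·X) = 0 for all i = 1, …, n is X = 0. Set ρ = Σ_{i=1}^n r_i². Then: (a) ∇ρ(p) = 0; (b) the Hessian matrix D of ρ at p satisfies XᵀDX + (JX)ᵀD(JX) = 2·Σ_{i=1}^n [ (d(r_i)_p(X))² + (d(r_i)_p(JX))² ] for all X ∈ ℝ^{2n}; and (c) the quadratic form X ↦ XᵀDX + (JX)ᵀD(JX) is positive definite. (This is the Levi form at p of the function ρ = Σ r_i² with respect to J, showing that a maximal totally real submanifold {r_1 = … = r_n = 0} is the zero set of a nonnegative strictly J-plurisubharmonic function.) -/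
open Matrix

/-- Let `r₁, …, rₙ : ℝ^{2n} → ℝ` be C² with `rᵢ(p) = 0`, and let `J` be
a real `2n×2n` matrix with `J² = −I` such that the only `X` with `d(rᵢ)ₚ(X) = 0` and
`d(rᵢ)ₚ(JX) = 0` for all `i` is `X = 0` (the submanifold `{r₁ = ⋯ = rₙ = 0}` is maximal
totally real). Then, for `ρ = Σ rᵢ²`: (a) `∇ρ(p) = 0`; (b) the Hessian `D` of `ρ` at `p`
satisfies `XᵀDX + (JX)ᵀD(JX) = 2·Σᵢ [(d(rᵢ)ₚ(X))² + (d(rᵢ)ₚ(JX))²]`; and (c) the quadratic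
form `X ↦ XᵀDX + (JX)ᵀD(JX)` (the Levi form of `ρ` at `p`) is positive definite. -/
theorem stmt16 {n : ℕ} (hn : 1 ≤ n) (r : Fin n → ((Fin n ⊕ Fin n) → ℝ) → ℝ)
    (hreg : ∀ i, ContDiff ℝ 2 (r i)) (p : (Fin n ⊕ Fin n) → ℝ) (hp : ∀ i, r i p = 0)
    (J : Matrix (Fin n ⊕ Fin n) (Fin n ⊕ Fin n) ℝ) (hJ : J * J = -1)
    (htotreal : ∀ X : (Fin n ⊕ Fin n) → ℝ,
      (∀ i, fderiv ℝ (r i) p X = 0 ∧ fderiv ℝ (r i) p (J.mulVec X) = 0) → X = 0) :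
    fderiv ℝ (fun y => ∑ i, r i y ^ 2) p = 0 ∧
      (∀ X : (Fin n ⊕ Fin n) → ℝ,
        fderiv ℝ (fderiv ℝ (fun y => ∑ i, r i y ^ 2)) p X X
            + fderiv ℝ (fderiv ℝ (fun y => ∑ i, r i y ^ 2)) p (J.mulVec X) (J.mulVec X)
          = 2 * ∑ i, ((fderiv ℝ (r i) p X) ^ 2 + (fderiv ℝ (r i) p (J.mulVec X)) ^ 2)) ∧
      (∀ X : (Fin n ⊕ Fin n) → ℝ, X ≠ 0 →
        0 < fderiv ℝ (fderiv ℝ (fun y => ∑ i, r i y ^ 2)) p X X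
            + fderiv ℝ (fderiv ℝ (fun y => ∑ i, r i y ^ 2)) p (J.mulVec X) (J.mulVec X)) := by
  have hd : ∀ i, Differentiable ℝ (r i) := fun i => (hreg i).differentiable (by norm_num)
  have hd2 : ∀ i, Differentiable ℝ (fderiv ℝ (r i)) := fun i =>
    ((hreg i).fderiv_right (m := 1) (by norm_num)).differentiable (by norm_num)
  have h1 : fderiv ℝ (fun y => ∑ i, r i y ^ 2)
      = fun y => ∑ i, (2 * r i y) • fderiv ℝ (r i) y := by
    funext y
    refine HasFDerivAt.fderiv (HasFDerivAt.fun_sum fun i _ => ?_)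
    simpa using ((hd i) y).hasFDerivAt.pow 2
  have h2 : ∀ X, fderiv ℝ (fderiv ℝ (fun y => ∑ i, r i y ^ 2)) p X X
      = 2 * ∑ i, (fderiv ℝ (r i) p X) ^ 2 := by
    intro X
    rw [h1]
    have h3 := HasFDerivAt.fun_sum (u := Finset.univ) fun i (_ : i ∈ Finset.univ) =>
      (((hd i) p).hasFDerivAt.const_mul 2).fun_smul ((hd2 i) p).hasFDerivAt
    rw [h3.fderiv, Finset.mul_sum]
    simp only [_root_.sum_apply, ContinuousLinearMap.sum_apply]
    refine Finset.sum_congr rfl fun i _ => ?_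
    simp [hp i]
    ring
  have hb : ∀ X : (Fin n ⊕ Fin n) → ℝ,
        fderiv ℝ (fderiv ℝ (fun y => ∑ i, r i y ^ 2)) p X X
            + fderiv ℝ (fderiv ℝ (fun y => ∑ i, r i y ^ 2)) p (J.mulVec X) (J.mulVec X)
          = 2 * ∑ i, ((fderiv ℝ (r i) p X) ^ 2 + (fderiv ℝ (r i) p (J.mulVec X)) ^ 2) := by
    intro X
    rw [h2, h2, Finset.sum_add_distrib, mul_add]
  refine ⟨?_, hb, ?_⟩
  · rw [h1]
    simp [hp]
  · intro X hX
    rw [hb]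
    have hnn : ∀ i ∈ Finset.univ,
        0 ≤ (fderiv ℝ (r i) p X) ^ 2 + (fderiv ℝ (r i) p (J.mulVec X)) ^ 2 :=
      fun i _ => by positivity
    refine mul_pos two_pos (lt_of_le_of_ne (Finset.sum_nonneg hnn) fun h => hX (htotreal X ?_))
    intro i
    have h4 := (Finset.sum_eq_zero_iff_of_nonneg hnn).1 h.symm i (Finset.mem_univ i)
    constructor <;> nlinarith [sq_nonneg (fderiv ℝ (r i) p X),
      sq_nonneg (fderiv ℝ (r i) p (J.mulVec X))]
end

section
/- Let n ≥ 1 and p ∈ ℝ^{2n} with p ≠ 0, and let D_ln = (1/‖p‖²)·I_{2n} − (2/‖p‖⁴)·p·pᵀ (the real Hessian of x ↦ ln‖x‖ at p). Let H, A be 2n×2n real matrices and h₀, h₁ ≥ 0 with ‖H‖ ≤ h₀ and ‖A‖ ≤ h₁/‖p‖ (operator norms). Then for every X ∈ ℝ^{2n}: Q(J_st + H, D_ln, A, X) ≥ −‖X‖²·( (2/‖p‖²)·h₀ + (1/‖p‖²)·h₀² + (2/‖p‖)·(1 + h₀)·h₁ ). (This is the lower bound on the Levi form of ln‖z‖ with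 respect to J = J_st + H, using that ‖∇(ln‖z‖)(p)‖ = 1/‖p‖.) -/
open Matrix

section aux
variable {m : Type*} [Fintype m]

lemma aux_norm (x : m → ℝ) : evnorm x = ‖WithLp.toLp 2 x‖ := by
  rw [EuclideanSpace.norm_eq]; simp [evnorm]

lemma aux_nonneg (x : m → ℝ) : 0 ≤ evnorm x := Real.sqrt_nonneg _

lemma aux_sq (x : m → ℝ) : evnorm x ^ 2 = x ⬝ᵥ x := by
  unfold evnorm
  rw [Real.sq_sqrt (Finset.sum_nonneg fun i _ => sq_nonneg _)]
  simp [dotProduct, sq]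

lemma aux_cs (x y : m → ℝ) : |x ⬝ᵥ y| ≤ evnorm x * evnorm y := by
  rw [aux_norm, aux_norm]
  have h := abs_real_inner_le_norm (WithLp.toLp 2 y) (WithLp.toLp 2 x)
  rw [EuclideanSpace.inner_toLp_toLp] at h
  simp only [star_trivial] at h
  linarith

lemma aux_op [DecidableEq m] (M : Matrix m m ℝ) (x : m → ℝ) :
    evnorm (M *ᵥ x) ≤ opnorm M * evnorm x := by
  rw [aux_norm, aux_norm]
  have h := (Matrix.toEuclideanCLM (𝕜 := ℝ) M).le_opNorm (WithLp.toLp 2 x)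
  rwa [Matrix.toEuclideanCLM_toLp] at h

lemma aux_add (x y : m → ℝ) : evnorm (x + y) ≤ evnorm x + evnorm y := by
  rw [aux_norm, aux_norm, aux_norm, WithLp.toLp_add]
  exact norm_add_le _ _

lemma aux_bessel (p X Y : m → ℝ) (h : X ⬝ᵥ Y = 0) (hXY : Y ⬝ᵥ Y = X ⬝ᵥ X) :
    (p ⬝ᵥ X) ^ 2 + (p ⬝ᵥ Y) ^ 2 ≤ (p ⬝ᵥ p) * (X ⬝ᵥ X) := by
  have h0 : 0 ≤ X ⬝ᵥ X := by rw [← aux_sq]; positivity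
  rcases h0.eq_or_lt with h0 | h0
  · have hX : X = 0 := dotProduct_self_eq_zero.1 h0.symm
    have hY : Y = 0 := dotProduct_self_eq_zero.1 (hXY.trans h0.symm)
    simp [hX, hY]
  · set v := (X ⬝ᵥ X) • p - (p ⬝ᵥ X) • X - (p ⬝ᵥ Y) • Y with hv
    have h1 : 0 ≤ v ⬝ᵥ v := by rw [← aux_sq]; positivity
    have h2 : v ⬝ᵥ v = (X ⬝ᵥ X) * ((p ⬝ᵥ p) * (X ⬝ᵥ X) - ((p ⬝ᵥ X) ^ 2 + (p ⬝ᵥ Y) ^ 2)) := by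
      simp only [hv, sub_dotProduct, dotProduct_sub, smul_dotProduct, dotProduct_smul,
        smul_eq_mul, dotProduct_comm X p, dotProduct_comm Y p, dotProduct_comm Y X, h, hXY]
      ring
    rw [h2] at h1
    linarith [nonneg_of_mul_nonneg_right h1 h0]

lemma aux_refl (p Y Z : m → ℝ) :
    |(p ⬝ᵥ p) * (Y ⬝ᵥ Z) - 2 * (p ⬝ᵥ Y) * (p ⬝ᵥ Z)| ≤ evnorm p ^ 2 * (evnorm Y * evnorm Z) := by
  set v := (p ⬝ᵥ p) • Z - (2 * (p ⬝ᵥ Z)) • p with hv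
  have h1 : evnorm v ^ 2 = (evnorm p ^ 2 * evnorm Z) ^ 2 := by
    rw [mul_pow, aux_sq, aux_sq, aux_sq]
    simp only [hv, sub_dotProduct, dotProduct_sub, smul_dotProduct, dotProduct_smul,
        smul_eq_mul, dotProduct_comm Z p]
    ring
  have h2 : evnorm v = evnorm p ^ 2 * evnorm Z := by
    have := aux_nonneg v
    have := aux_nonneg Z
    exact (pow_left_inj₀ (by positivity) (by positivity) two_ne_zero).1 h1
  have h3 := aux_cs Y v
  rw [h2] at h3
  have h4 : Y ⬝ᵥ v = (p ⬝ᵥ p) * (Y ⬝ᵥ Z) - 2 * (p ⬝ᵥ Y) * (p ⬝ᵥ Z) := by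
    simp only [hv, dotProduct_sub, dotProduct_smul, smul_eq_mul, dotProduct_comm Y p]
    ring
  rw [h4] at h3
  linarith

lemma aux_D [DecidableEq m] (p x y : m → ℝ) (hp : 0 < evnorm p) :
    x ⬝ᵥ (((1 / evnorm p ^ 2) • (1 : Matrix m m ℝ)
      - (2 / evnorm p ^ 4) • Matrix.vecMulVec p p) *ᵥ y)
      = ((p ⬝ᵥ p) * (x ⬝ᵥ y) - 2 * (p ⬝ᵥ x) * (p ⬝ᵥ y)) / evnorm p ^ 4 := by
  rw [sub_mulVec, smul_mulVec, smul_mulVec, one_mulVec, vecMulVec_mulVec, ← aux_sq p]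
  simp only [dotProduct_sub, dotProduct_smul, smul_eq_mul, dotProduct_comm x p, op_smul_eq_smul]
  field_simp

lemma aux_A (A : Matrix m m ℝ) (x w : m → ℝ) :
    x ⬝ᵥ ((A - Aᵀ) *ᵥ w) = x ⬝ᵥ (A *ᵥ w) - w ⬝ᵥ (A *ᵥ x) := by
  rw [sub_mulVec, dotProduct_sub, mulVec_transpose, dotProduct_comm x (w ᵥ* A), dotProduct_mulVec w]

end aux

lemma aux_J (n : ℕ) (X : (Fin n ⊕ Fin n) → ℝ) : X ⬝ᵥ (Jstd n *ᵥ X) = 0 ∧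
    (Jstd n *ᵥ X) ⬝ᵥ (Jstd n *ᵥ X) = X ⬝ᵥ X := by
  have h : Jstd n *ᵥ X = Sum.elim (fun i => - X (Sum.inr i)) (fun i => X (Sum.inl i)) := by
    rw [Jstd, fromBlocks_mulVec]
    ext (i | i) <;> simp [neg_mulVec]
  rw [h]
  constructor
  · simp [dotProduct, mul_comm]
  · simp [dotProduct, add_comm]

/-- For `p ∈ ℝ^{2n} ∖ {0}`, let
`D_ln = (1/‖p‖²)·I − (2/‖p‖⁴)·p·pᵀ` (the real Hessian of `x ↦ ln‖x‖` at `p`). For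
matrices `H, A` and `h₀, h₁ ≥ 0` with `‖H‖ ≤ h₀` and `‖A‖ ≤ h₁/‖p‖`:
`Q(J_st + H, D_ln, A, X) ≥ −‖X‖²((2/‖p‖²)h₀ + (1/‖p‖²)h₀² + (2/‖p‖)(1 + h₀)h₁)`. -/
theorem stmt18 {n : ℕ} (hn : 1 ≤ n) (p : (Fin n ⊕ Fin n) → ℝ) (hp : p ≠ 0)
    (H A : Matrix (Fin n ⊕ Fin n) (Fin n ⊕ Fin n) ℝ) (h₀ h₁ : ℝ)
    (hh₀ : 0 ≤ h₀) (hh₁ : 0 ≤ h₁) (hH : opnorm H ≤ h₀)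
    (hA : opnorm A ≤ h₁ / evnorm p) (X : (Fin n ⊕ Fin n) → ℝ) :
    -(evnorm X ^ 2) * ((2 / evnorm p ^ 2) * h₀ + (1 / evnorm p ^ 2) * h₀ ^ 2
        + (2 / evnorm p) * (1 + h₀) * h₁) ≤
      LeviQ (Jstd n + H)
        ((1 / evnorm p ^ 2) • (1 : Matrix (Fin n ⊕ Fin n) (Fin n ⊕ Fin n) ℝ)
          - (2 / evnorm p ^ 4) • Matrix.vecMulVec p p) A X := by
  have hr : 0 < evnorm p := by
    refine lt_of_le_of_ne (aux_nonneg p) fun h => hp ?_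
    have := aux_sq p
    rw [← h] at this
    exact dotProduct_self_eq_zero.1 (by linarith)
  obtain ⟨hJ1, hJ2⟩ := aux_J n X
  have ha := aux_nonneg X
  unfold LeviQ
  rw [aux_A, aux_D _ _ _ hr, aux_D _ _ _ hr, add_mulVec]
  set Y := Jstd n *ᵥ X with hY
  have hYa : evnorm Y = evnorm X :=
    (pow_left_inj₀ (aux_nonneg _) ha two_ne_zero).1 (by rw [aux_sq, aux_sq, hJ2])
  have hZa : evnorm (H *ᵥ X) ≤ h₀ * evnorm X :=
    (aux_op H X).trans (mul_le_mul_of_nonneg_right hH ha)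
  set Z := H *ᵥ X with hZ
  have hZ0 := aux_nonneg Z
  have hW : evnorm (Y + Z) ≤ (1 + h₀) * evnorm X := by
    have := aux_add Y Z
    rw [hYa] at this
    linarith
  have hW0 := aux_nonneg (Y + Z)
  have hAW : ∀ u v : (Fin n ⊕ Fin n) → ℝ,
      |u ⬝ᵥ (A *ᵥ v)| ≤ h₁ / evnorm p * (evnorm u * evnorm v) := by
    intro u v
    have hu := aux_nonneg u
    calc _ ≤ evnorm u * evnorm (A *ᵥ v) := aux_cs _ _
      _ ≤ evnorm u * (h₁ / evnorm p * evnorm v) := by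
        gcongr
        exact (aux_op A v).trans (mul_le_mul_of_nonneg_right hA (aux_nonneg v))
      _ = _ := by ring
  have hXW : evnorm X * evnorm (Y + Z) ≤ (1 + h₀) * evnorm X ^ 2 := by nlinarith
  have hc : 0 ≤ h₁ / evnorm p := by positivity
  have hXW' := mul_le_mul_of_nonneg_left hXW hc
  have e1 := (abs_le.1 (hAW X (Y + Z))).1
  have e2 := (abs_le.1 (hAW (Y + Z) X)).2
  rw [mul_comm (evnorm (Y + Z))] at e2
  have b := aux_bessel p X Y hJ1 hJ2
  have r1 := (abs_le.1 (aux_refl p Y Z)).1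
  have r2 := (abs_le.1 (aux_refl p Z Z)).1
  rw [hYa] at r1
  have z1 : evnorm X * evnorm Z ≤ h₀ * evnorm X ^ 2 := by nlinarith
  have z2 : evnorm Z * evnorm Z ≤ h₀ ^ 2 * evnorm X ^ 2 := by
    have := mul_le_mul hZa hZa hZ0 (by positivity)
    linarith
  have z1' := mul_le_mul_of_nonneg_left z1 (sq_nonneg (evnorm p))
  have z2' := mul_le_mul_of_nonneg_left z2 (sq_nonneg (evnorm p))
  have main : -(evnorm p ^ 2 * (2 * h₀ + h₀ ^ 2) * evnorm X ^ 2) ≤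
      ((p ⬝ᵥ p) * (X ⬝ᵥ X) - 2 * (p ⬝ᵥ X) * (p ⬝ᵥ X)) +
      ((p ⬝ᵥ p) * ((Y + Z) ⬝ᵥ (Y + Z)) - 2 * (p ⬝ᵥ (Y + Z)) * (p ⬝ᵥ (Y + Z))) := by
    simp only [add_dotProduct, dotProduct_add, dotProduct_comm Z Y, hJ2]
    linarith
  have main' := div_le_div_of_nonneg_right main (by positivity : 0 ≤ evnorm p ^ 4)
  rw [add_div] at main'
  have key : -(evnorm X ^ 2) * ((2 / evnorm p ^ 2) * h₀ + (1 / evnorm p ^ 2) * h₀ ^ 2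
        + (2 / evnorm p) * (1 + h₀) * h₁) =
      -(evnorm p ^ 2 * (2 * h₀ + h₀ ^ 2) * evnorm X ^ 2) / evnorm p ^ 4
      - 2 * (h₁ / evnorm p * ((1 + h₀) * evnorm X ^ 2)) := by
    field_simp
    ring
  rw [key]
  linarith
end
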